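/- arXiv:2504.00276 — 2 statements merged into one kernel-verified Lean document; each statement's English description precedes it below -/
import Mathlib

section
/- Let d, N, Q be positive integers, let φ : ℝ^d → ℝ be an even function, let z⁽¹⁾, …, z⁽ᴺ⁾ ∈ ℝ^d be pairwise distinct points, and let q₁, …, q_Q : ℝ^d → ℝ be functions such that the N × Q matrix P with entries P_{ij} = q_j(z⁽ⁱ⁾) has linearly independent columns. Define the N × N matrix R by R_{ij} = φ(z⁽ⁱ⁾ − z⁽ʲ⁾). Suppose φ is conditionally positive definite with respect to (q₁,…,q_Q) at the points z⁽¹⁾,…,z⁽ᴺ⁾, i.e., for every nonzero α ∈ ℝᴺ with Σ_{i=1}^{N} α_i q_k(z⁽ⁱ⁾) = 0 for all k ∈ {1,…,Q}, it holds that Σ_{i=1}^{N} Σ_{j=1}^{N} α_i α_j φ(z⁽ⁱ⁾ − z⁽ʲ⁾) > 0. Then for every family of target values m₁, …, m_N ∈ ℝ there exist unique coefficients α ∈ ℝᴺ and β ∈ ℝ^Q such that the interpolant I(z) = Σ_{i=1}^{N} α_i φ(z − z⁽ⁱ⁾) + Σ_{k=1}^{Q} β_k q_k(z) satisfies I(z⁽ʲ⁾)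 = m_j for all j ∈ {1,…,N} and the side conditions Σ_{i=1}^{N} α_i q_k(z⁽ⁱ⁾) = 0 hold for all k ∈ {1,…,Q}. -/
/-!
With `A` the kernel matrix and `P` the evaluation matrix, the interpolation and side conditions form
the square saddle point system `A α + P β = m`, `Pᵀ α = 0`, so it suffices that the homogeneous
system has only the trivial solution. Pairing `A α + P β = 0` with `α` kills the `β`-part, because
`α ⬝ P β = Pᵀ α ⬝ β = 0`, and leaves `α ⬝ A α = 0`. Hence `α = 0` by conditional definiteness, and
then `P β = 0` gives `β = 0`.
-/

open Matrix

section SaddlePoint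

variable {R ι κ : Type*} [Fintype ι] [Fintype κ]

/-- The linear map of the saddle point system with block matrix `[A, P; Pᵀ, 0]`, acting on pairs
`(α, β)` so that the two blocks of unknowns stay separate. -/
def saddlePointMap [CommSemiring R] (A : Matrix ι ι R) (P : Matrix ι κ R) :
    (ι → R) × (κ → R) →ₗ[R] (ι → R) × (κ → R) :=
  (A.mulVecLin.coprod P.mulVecLin).prod (Pᵀ.mulVecLin ∘ₗ LinearMap.fst R (ι → R) (κ → R))

theorem saddlePointMap_apply [CommSemiring R] (A : Matrix ι ι R) (P : Matrix ι κ R)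
    (x : (ι → R) × (κ → R)) :
    saddlePointMap A P x = (A *ᵥ x.1 + P *ᵥ x.2, Pᵀ *ᵥ x.1) :=
  rfl

theorem dotProduct_mulVec_eq_zero_of_transpose_mulVec_eq_zero [CommSemiring R]
    {A : Matrix ι ι R} {P : Matrix ι κ R} {α : ι → R} {β : κ → R}
    (hsum : A *ᵥ α + P *ᵥ β = 0) (hside : Pᵀ *ᵥ α = 0) : α ⬝ᵥ A *ᵥ α = 0 := by
  have hcross : α ⬝ᵥ P *ᵥ β = 0 := by
    rw [dotProduct_mulVec, ← mulVec_transpose, hside, zero_dotProduct]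
  calc
    α ⬝ᵥ A *ᵥ α = α ⬝ᵥ (A *ᵥ α + P *ᵥ β) := by rw [dotProduct_add, hcross, add_zero]
    _ = 0 := by rw [hsum, dotProduct_zero]

theorem saddlePointMap_injective [CommRing R] {A : Matrix ι ι R} {P : Matrix ι κ R}
    (hP : ∀ β, P *ᵥ β = 0 → β = 0)
    (hA : ∀ α, α ≠ 0 → Pᵀ *ᵥ α = 0 → α ⬝ᵥ A *ᵥ α ≠ 0) :
    Function.Injective (saddlePointMap A P) := by
  rw [injective_iff_map_eq_zero]
  rintro ⟨α, β⟩ h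
  obtain ⟨hsum, hside⟩ : A *ᵥ α + P *ᵥ β = 0 ∧ Pᵀ *ᵥ α = 0 := Prod.mk.inj h
  have hα : α = 0 := by
    by_contra hne
    exact hA α hne hside (dotProduct_mulVec_eq_zero_of_transpose_mulVec_eq_zero hsum hside)
  have hβ : β = 0 := hP β (by simpa [hα] using hsum)
  rw [hα, hβ, Prod.mk_zero_zero]

theorem saddlePointMap_bijective [Field R] {A : Matrix ι ι R} {P : Matrix ι κ R}
    (hP : ∀ β, P *ᵥ β = 0 → β = 0)
    (hA : ∀ α, α ≠ 0 → Pᵀ *ᵥ α = 0 → α ⬝ᵥ A *ᵥ α ≠ 0) :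
    Function.Bijective (saddlePointMap A P) :=
  have hinj := saddlePointMap_injective hP hA
  ⟨hinj, LinearMap.injective_iff_surjective.mp hinj⟩

end SaddlePoint

section Interpolation

variable {R X ι κ : Type*}

/-- The kernel matrix of a two-point kernel `K` at the points `z`; the translation-invariant kernel
of a function `φ` is `K x y = φ (x - y)`. -/
def kernelMatrix (K : X → X → R) (z : ι → X) : Matrix ι ι R :=
  of fun i j => K (z i) (z j)

/-- The matrix evaluating linear combinations of the functions `q` at the points `z`; rows are
indexed by points, columns by functions. -/
def evaluationMatrix (q : κ → X → R) (z : ι → X) : Matrix ι κ R :=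
  of fun i k => q k (z i)

theorem kernelMatrix_mulVec_apply [CommSemiring R] [Fintype ι] (K : X → X → R) (z : ι → X)
    (α : ι → R) (j : ι) : (kernelMatrix K z *ᵥ α) j = ∑ i, α i * K (z j) (z i) := by
  simp only [kernelMatrix, mulVec, dotProduct, of_apply, mul_comm]

theorem dotProduct_kernelMatrix_mulVec [CommSemiring R] [Fintype ι] (K : X → X → R) (z : ι → X)
    (α : ι → R) :
    α ⬝ᵥ kernelMatrix K z *ᵥ α = ∑ i, ∑ j, α i * α j * K (z i) (z j) := by
  simp only [dotProduct, kernelMatrix_mulVec_apply, Finset.mul_sum, mul_assoc]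

theorem evaluationMatrix_mulVec_apply [CommSemiring R] [Fintype κ] (q : κ → X → R) (z : ι → X)
    (β : κ → R) (i : ι) : (evaluationMatrix q z *ᵥ β) i = ∑ k, β k * q k (z i) := by
  simp only [evaluationMatrix, mulVec, dotProduct, of_apply, mul_comm]

theorem transpose_evaluationMatrix_mulVec_apply [CommSemiring R] [Fintype ι] (q : κ → X → R)
    (z : ι → X) (α : ι → R) (k : κ) :
    ((evaluationMatrix q z)ᵀ *ᵥ α) k = ∑ i, α i * q k (z i) := by
  simp only [evaluationMatrix, mulVec, dotProduct, transpose_apply, of_apply, mul_comm]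

theorem saddlePointMap_kernelMatrix_eq_iff [CommSemiring R] [Fintype ι] [Fintype κ]
    (K : X → X → R) (z : ι → X) (q : κ → X → R) (x : (ι → R) × (κ → R)) (m : ι → R) :
    saddlePointMap (kernelMatrix K z) (evaluationMatrix q z) x = (m, 0) ↔
      (∀ j, (∑ i, x.1 i * K (z j) (z i)) + ∑ k, x.2 k * q k (z j) = m j) ∧
      (∀ k, ∑ i, x.1 i * q k (z i) = 0) := by
  simp only [saddlePointMap_apply, Prod.mk.injEq, funext_iff, Pi.add_apply, Pi.zero_apply,
    kernelMatrix_mulVec_apply, evaluationMatrix_mulVec_apply,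
    transpose_evaluationMatrix_mulVec_apply]

theorem stmt_9_general [Field R] [Fintype ι] [Fintype κ] (K : X → X → R) (z : ι → X)
    (q : κ → X → R)
    (hP : ∀ β : κ → R, (∀ i, ∑ k, β k * q k (z i) = 0) → β = 0)
    (hK : ∀ α : ι → R, α ≠ 0 → (∀ k, ∑ i, α i * q k (z i) = 0) →
      ∑ i, ∑ j, α i * α j * K (z i) (z j) ≠ 0)
    (m : ι → R) :
    ∃! αβ : (ι → R) × (κ → R),
      (∀ j, (∑ i, αβ.1 i * K (z j) (z i)) + ∑ k, αβ.2 k * q k (z j) = m j) ∧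
      (∀ k, ∑ i, αβ.1 i * q k (z i) = 0) := by
  have hbij : Function.Bijective (saddlePointMap (kernelMatrix K z) (evaluationMatrix q z)) := by
    refine saddlePointMap_bijective (fun β hβ => hP β fun i => ?_) fun α hα hside => ?_
    · rw [← evaluationMatrix_mulVec_apply, hβ, Pi.zero_apply]
    · rw [dotProduct_kernelMatrix_mulVec]
      refine hK α hα fun k => ?_
      rw [← transpose_evaluationMatrix_mulVec_apply, hside, Pi.zero_apply]
  simpa only [saddlePointMap_kernelMatrix_eq_iff] using hbij.existsUnique (m, 0)

end Interpolation

/-- RBF interpolation with a polynomial tail: if `φ` is even and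
conditionally positive definite w.r.t. `q₁,…,q_Q` at the pairwise distinct points
`z⁽¹⁾,…,z⁽ᴺ⁾`, and the matrix `P = (q_j(z⁽ⁱ⁾))` has linearly independent columns,
then for any target values `m₁,…,m_N` there exist unique coefficients `α, β` such
that `I(z) = Σᵢ αᵢ φ(z − z⁽ⁱ⁾) + Σₖ βₖ qₖ(z)` interpolates the data and satisfies
the side conditions `Σᵢ αᵢ qₖ(z⁽ⁱ⁾) = 0`. -/
theorem stmt_9 (d N Q : ℕ) (hd : 0 < d) (hN : 0 < N) (hQ : 0 < Q)
    (φ : EuclideanSpace ℝ (Fin d) → ℝ) (heven : ∀ z, φ (-z) = φ z)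
    (z : Fin N → EuclideanSpace ℝ (Fin d)) (hz : Function.Injective z)
    (q : Fin Q → EuclideanSpace ℝ (Fin d) → ℝ)
    (hP : ∀ β : Fin Q → ℝ, (∀ i, ∑ k, β k * q k (z i) = 0) → β = 0)
    (hcpd : ∀ α : Fin N → ℝ, α ≠ 0 → (∀ k, ∑ i, α i * q k (z i) = 0) →
      0 < ∑ i, ∑ j, α i * α j * φ (z i - z j))
    (m : Fin N → ℝ) :
    ∃! αβ : (Fin N → ℝ) × (Fin Q → ℝ),
      (∀ j, (∑ i, αβ.1 i * φ (z j - z i)) + ∑ k, αβ.2 k * q k (z j) = m j) ∧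
      (∀ k, ∑ i, αβ.1 i * q k (z i) = 0) :=
  stmt_9_general (fun x y => φ (x - y)) z q hP (fun α hα hside => (hcpd α hα hside).ne') m
end

section
/- Let f : ℝ^{nx} × ℝ^{nu} × ℝ^{nη} → ℝ^{nx} be continuously differentiable with partial Fréchet derivative L_f(x, u, η) with respect to (x, u), fix η ∈ ℝ^{nη} with f(0, 0, η) = 0, and fix (x, u) ∈ ℝ^{nx} × ℝ^{nu}. Let I : ℝ^{nx} × ℝ^{nu} × ℝ^{nη} → (ℝ^{nx} × ℝ^{nu} →L ℝ^{nx}) be a continuous map and let ε ≥ 0 be such that ‖L_f(λx, λu, η) − I(λx, λu, η)‖ ≤ ε for all λ ∈ [0,1], where ‖·‖ is the operator norm. Define the surrogate value f̂ = (∫_{0}^{1} I(λx, λu, η) dλ)(x, u). Then ‖f(x, u, η) − f̂‖ ≤ ε · ‖(x, u)‖. -/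
/-!
Subtracting from `t ↦ f (t • x, t • u, η)` the primitive of `t ↦ I (t • x, t • u, η) (x, u)` that
vanishes at `0` leaves a path from `0` to `f (x, u, η) - f̂`. Its velocity is `L - I` applied to
`(x, u)`, of norm at most `ε * ‖(x, u)‖`, so the mean value inequality bounds its displacement and
no derivative has to be integrated. The norm on the product is the maximum of the two norms.
-/

section IntegralApproximation

open Set AffineMap MeasureTheory

variable {E F : Type*} [NormedAddCommGroup E] [NormedSpace ℝ E]
  [NormedAddCommGroup F] [NormedSpace ℝ F] [CompleteSpace F]

theorem hasDerivWithinAt_integral_of_continuousOn_Icc {φ : ℝ → F} {a b t : ℝ}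
    (hφ : ContinuousOn φ (Icc a b)) (ht : t ∈ Icc a b) :
    HasDerivWithinAt (fun s => ∫ r in a..s, φ r) (φ t) (Icc a b) t := by
  have : Fact (t ∈ Icc a b) := ⟨ht⟩
  have hint : IntervalIntegrable φ volume a t :=
    (hφ.mono (Icc_subset_Icc_right ht.2)).intervalIntegrable_of_Icc ht.1
  exact intervalIntegral.integral_hasDerivWithinAt_right hint
    (hφ.stronglyMeasurableAtFilter_nhdsWithin measurableSet_Icc t) (hφ t ht)

theorem norm_sub_sub_integral_le_of_norm_deriv_sub_le {γ γ' φ : ℝ → F} {a b C : ℝ} (hab : a ≤ b)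
    (hγ : ∀ t ∈ Icc a b, HasDerivWithinAt γ (γ' t) (Icc a b) t) (hφ : ContinuousOn φ (Icc a b))
    (bound : ∀ t ∈ Ico a b, ‖γ' t - φ t‖ ≤ C) :
    ‖γ b - γ a - ∫ t in a..b, φ t‖ ≤ C * (b - a) := by
  have hderiv : ∀ t ∈ Icc a b,
      HasDerivWithinAt (fun s => γ s - ∫ r in a..s, φ r) (γ' t - φ t) (Icc a b) t := fun t ht =>
    (hγ t ht).sub (hasDerivWithinAt_integral_of_continuousOn_Icc hφ ht)
  have hle := norm_image_sub_le_of_norm_deriv_le_segment' hderiv bound b (right_mem_Icc.2 hab)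
  rwa [intervalIntegral.integral_same, sub_zero, sub_right_comm] at hle

theorem norm_image_sub_sub_integral_apply_le_of_norm_fderiv_sub_le {g : E → F}
    {g' A : ℝ → E →L[ℝ] F} {x y : E} {C : ℝ}
    (hg : ∀ t ∈ Icc (0 : ℝ) 1, HasFDerivAt g (g' t) (lineMap x y t))
    (hA : ContinuousOn A (Icc 0 1)) (bound : ∀ t ∈ Ico (0 : ℝ) 1, ‖g' t - A t‖ ≤ C) :
    ‖g y - g x - (∫ t in (0 : ℝ)..1, A t) (y - x)‖ ≤ C * ‖y - x‖ := by
  have hderiv : ∀ t ∈ Icc (0 : ℝ) 1,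
      HasDerivWithinAt (g ∘ lineMap x y) (g' t (y - x)) (Icc 0 1) t := fun t ht =>
    (hg t ht).comp_hasDerivWithinAt t hasDerivWithinAt_lineMap
  have hbound : ∀ t ∈ Ico (0 : ℝ) 1, ‖g' t (y - x) - A t (y - x)‖ ≤ C * ‖y - x‖ := fun t ht =>
    (g' t - A t).le_of_opNorm_le (bound t ht) (y - x)
  rw [ContinuousLinearMap.intervalIntegral_apply (hA.intervalIntegrable_of_Icc zero_le_one)]
  simpa using norm_sub_sub_integral_le_of_norm_deriv_sub_le zero_le_one hderiv
    (hA.clm_apply continuousOn_const) hbound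

end IntegralApproximation

theorem stmt_10_general {X U H F : Type*} [NormedAddCommGroup X] [NormedSpace ℝ X]
    [NormedAddCommGroup U] [NormedSpace ℝ U]
    [NormedAddCommGroup F] [NormedSpace ℝ F] [CompleteSpace F]
    {f : X × U × H → F} {L : X → U → H → (X × U) →L[ℝ] F} {I : X × U × H → (X × U) →L[ℝ] F}
    {x : X} {u : U} {η : H} {ε : ℝ} (heq : f (0, 0, η) = 0)
    (hL : ∀ l ∈ Set.Icc (0 : ℝ) 1,
      HasFDerivAt (fun p : X × U => f (p.1, p.2, η)) (L (l • x) (l • u) η) (l • x, l • u))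
    (hI : ContinuousOn (fun l : ℝ => I (l • x, l • u, η)) (Set.Icc 0 1))
    (hbound : ∀ l ∈ Set.Icc (0 : ℝ) 1, ‖L (l • x) (l • u) η - I (l • x, l • u, η)‖ ≤ ε) :
    ‖f (x, u, η) - (∫ l in (0 : ℝ)..1, I (l • x, l • u, η)) (x, u)‖ ≤ ε * ‖(x, u)‖ := by
  have hline : ∀ l ∈ Set.Icc (0 : ℝ) 1, HasFDerivAt (fun p : X × U => f (p.1, p.2, η))
      (L (l • x) (l • u) η) (AffineMap.lineMap 0 (x, u) l) := by
    simpa [AffineMap.lineMap_apply_module] using hL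
  simpa [heq] using norm_image_sub_sub_integral_apply_le_of_norm_fderiv_sub_le hline hI
    fun l hl => hbound l (Set.Ico_subset_Icc_self hl)

/-- Error bound for the on-the-fly surrogate: if `f(0,0,η) = 0`,
`I` is a continuous interpolant with `‖L_f(λx,λu,η) − I(λx,λu,η)‖ ≤ ε` for all
`λ ∈ [0,1]`, and `f̂ = (∫₀¹ I(λx,λu,η) dλ)(x,u)`, then
`‖f(x,u,η) − f̂‖ ≤ ε ‖(x,u)‖`. -/
theorem stmt_10 (nx nu nη : ℕ) (hnx : 0 < nx) (hnu : 0 < nu) (hnη : 0 < nη)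
    (f : EuclideanSpace ℝ (Fin nx) × EuclideanSpace ℝ (Fin nu) × EuclideanSpace ℝ (Fin nη) →
      EuclideanSpace ℝ (Fin nx))
    (hf : ContDiff ℝ 1 f)
    (L : EuclideanSpace ℝ (Fin nx) → EuclideanSpace ℝ (Fin nu) → EuclideanSpace ℝ (Fin nη) →
      (EuclideanSpace ℝ (Fin nx) × EuclideanSpace ℝ (Fin nu)) →L[ℝ] EuclideanSpace ℝ (Fin nx))
    (hL : ∀ x u η, L x u η =
      fderiv ℝ (fun p : EuclideanSpace ℝ (Fin nx) × EuclideanSpace ℝ (Fin nu) =>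
        f (p.1, p.2, η)) (x, u))
    (η : EuclideanSpace ℝ (Fin nη)) (heq : f (0, 0, η) = 0)
    (x : EuclideanSpace ℝ (Fin nx)) (u : EuclideanSpace ℝ (Fin nu))
    (I : EuclideanSpace ℝ (Fin nx) × EuclideanSpace ℝ (Fin nu) × EuclideanSpace ℝ (Fin nη) →
      (EuclideanSpace ℝ (Fin nx) × EuclideanSpace ℝ (Fin nu)) →L[ℝ] EuclideanSpace ℝ (Fin nx))
    (hI : Continuous I) (ε : ℝ) (hε : 0 ≤ ε)
    (hbound : ∀ l ∈ Set.Icc (0:ℝ) 1, ‖L (l • x) (l • u) η - I (l • x, l • u, η)‖ ≤ ε) :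
    ‖f (x, u, η) - (∫ l in (0:ℝ)..1, I (l • x, l • u, η)) (x, u)‖ ≤ ε * ‖(x, u)‖ := by
  have hslice : Differentiable ℝ fun p : EuclideanSpace ℝ (Fin nx) × EuclideanSpace ℝ (Fin nu) =>
      f (p.1, p.2, η) := (hf.differentiable one_ne_zero).comp (by fun_prop)
  exact stmt_10_general heq (fun l _ => hL (l • x) (l • u) η ▸ (hslice _).hasFDerivAt)
    (hI.comp (by fun_prop)).continuousOn hbound
end
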